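/- Let u > 0, let n ≥ 1 be a natural number with nu ≤ 1/2, let δ_1, …, δ_n be real numbers with |δ_i| ≤ u, and let ρ_1, …, ρ_n ∈ {+1, -1}. Define θ by 1 + θ = sqrt(∏_{i=1}^n (1 + δ_i)^{ρ_i}). If moreover (3 - 2nu)·(⌊n/2⌋ + 1)²·u ≤ 2 + ⌊n/2⌋ - ⌈n/2⌉, then |θ| ≤ γ_{⌊n/2⌋ + 1}, where γ_m := mu/(1 - mu). -/

import Mathlib

theorem one_add_zpow_mem_Icc {u d : ℝ} {r : ℤ} (hu : 0 < u) (hu1 : u < 1) (hd : |d| ≤ u)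
    (hr : r = 1 ∨ r = -1) : (1 + d) ^ r ∈ Set.Icc (1 - u) (1 - u)⁻¹ := by
  obtain ⟨h1, h2⟩ := abs_le.mp hd
  have h0 : 0 < 1 - u := by linarith
  have hd0 : 0 < 1 + d := by linarith
  rcases hr with rfl | rfl
  · rw [zpow_one]
    refine ⟨by linarith, ?_⟩
    rw [← one_div, le_div_iff₀ h0]
    nlinarith
  · rw [zpow_neg_one]
    refine ⟨?_, inv_anti₀ h0 (by linarith)⟩
    rw [← one_div, le_div_iff₀ hd0]
    nlinarith

theorem prod_one_add_zpow_mem_Icc {u : ℝ} (hu : 0 < u) (hu1 : u < 1) {n : ℕ} {δ : Fin n → ℝ}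
    (hδ : ∀ i, |δ i| ≤ u) {ρ : Fin n → ℤ} (hρ : ∀ i, ρ i = 1 ∨ ρ i = -1) :
    ∏ i, (1 + δ i) ^ ρ i ∈ Set.Icc ((1 - u) ^ n) ((1 - u) ^ n)⁻¹ := by
  have h0 : 0 < 1 - u := by linarith
  have hf i := one_add_zpow_mem_Icc hu hu1 (hδ i) (hρ i)
  constructor
  · simpa using Finset.prod_le_prod (s := Finset.univ) (fun _ _ => h0.le) (fun i _ => (hf i).1)
  · simpa using Finset.prod_le_prod (s := Finset.univ) (fun i _ => h0.le.trans (hf i).1)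
      (fun i _ => (hf i).2)

theorem sq_one_sub_half_succ_mul_le_pow {u : ℝ} (hu : 0 < u) {n : ℕ} (hn : 1 ≤ n)
    (hnu : (n : ℝ) * u ≤ 1 / 2) :
    ((n / 2 : ℕ) + 1 : ℝ) * u < 1 ∧ (1 - ((n / 2 : ℕ) + 1 : ℝ) * u) ^ 2 ≤ (1 - u) ^ n := by
  have hu2 : u ≤ 1 / 2 := by
    have : (1 : ℝ) ≤ n := by exact_mod_cast hn
    nlinarith
  have bern (k : ℕ) : 1 - k * u ≤ (1 - u) ^ k := by
    have := one_add_mul_le_pow (a := -u) (by linarith) k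
    rw [← sub_eq_add_neg] at this
    linarith
  obtain ⟨k, rfl | rfl⟩ := Nat.even_or_odd' n
  · rw [show 2 * k / 2 = k by omega]
    push_cast at hnu
    have hk : (0 : ℝ) ≤ k := k.cast_nonneg
    have h1 : ((k : ℝ) + 1) * u < 1 := by nlinarith
    refine ⟨h1, ?_⟩
    rw [mul_comm 2 k, pow_mul]
    exact pow_le_pow_left₀ (by linarith) (by linarith [bern k]) 2
  · rw [show (2 * k + 1) / 2 = k by omega]
    push_cast at hnu
    have hku : 0 ≤ (k : ℝ) * u := by positivity
    have h1 : ((k : ℝ) + 1) * u < 1 := by nlinarith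
    refine ⟨h1, ?_⟩
    have h2 : (1 - k * u) ^ 2 ≤ ((1 - u) ^ k) ^ 2 :=
      pow_le_pow_left₀ (by linarith) (bern k) 2
    have h3 : u + (k * u) ^ 2 ≤ 1 := by nlinarith
    rw [pow_succ (1 - u), mul_comm 2 k, pow_mul]
    refine le_trans ?_ (mul_le_mul_of_nonneg_right h2 (by linarith))
    nlinarith [mul_nonneg hu.le (sub_nonneg.mpr h3)]

/-- Let `u > 0`, `n ≥ 1` with `n*u ≤ 1/2`, `|δ i| ≤ u` and `ρ i = ±1`, and let
`1 + θ = sqrt (∏ i, (1 + δ i) ^ ρ i)`.  If moreover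
`(3 - 2*n*u) * (⌊n/2⌋ + 1)^2 * u ≤ 2 + ⌊n/2⌋ - ⌈n/2⌉`, then `|θ| ≤ γ (⌊n/2⌋ + 1)`,
where `γ m = m*u/(1 - m*u)`. -/
theorem abs_theta_le_gamma_halfn_succ (u : ℝ) (hu : 0 < u) (n : ℕ) (hn : 1 ≤ n)
    (hnu : (n : ℝ) * u ≤ 1 / 2)
    (δ : Fin n → ℝ) (hδ : ∀ i, |δ i| ≤ u)
    (ρ : Fin n → ℤ) (hρ : ∀ i, ρ i = 1 ∨ ρ i = -1)
    (θ : ℝ) (hθ : 1 + θ = Real.sqrt (∏ i, (1 + δ i) ^ ρ i))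
    (hcond : (3 - 2 * ((n : ℝ) * u)) * ((n / 2 : ℕ) + 1 : ℝ) ^ 2 * u ≤
        2 + ((n / 2 : ℕ) : ℝ) - (((n + 1) / 2 : ℕ) : ℝ)) :
    |θ| ≤ ((n / 2 : ℕ) + 1 : ℝ) * u / (1 - ((n / 2 : ℕ) + 1 : ℝ) * u) := by
  have hu1 : u < 1 := by
    have : (1 : ℝ) ≤ n := by exact_mod_cast hn
    nlinarith
  obtain ⟨hm1, hsq⟩ := sq_one_sub_half_succ_mul_le_pow hu hn hnu
  obtain ⟨hlo, hhi⟩ := prod_one_add_zpow_mem_Icc hu hu1 hδ hρ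
  have hm0 : 0 < ((n / 2 : ℕ) + 1 : ℝ) * u := by positivity
  set x := ((n / 2 : ℕ) + 1 : ℝ) * u
  have hx : 0 < 1 - x := by linarith
  have hlower : 1 - x ≤ 1 + θ := hθ ▸ Real.le_sqrt_of_sq_le (hsq.trans hlo)
  have hupper : 1 + θ ≤ (1 - x)⁻¹ := by
    rw [hθ]
    refine Real.sqrt_le_iff.mpr ⟨by positivity, hhi.trans ?_⟩
    rw [inv_pow]
    exact inv_anti₀ (by positivity) hsq
  have hgamma : x / (1 - x) = (1 - x)⁻¹ - 1 := by field_simp; ring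
  have hle : x ≤ x / (1 - x) := by
    rw [le_div_iff₀ hx]
    nlinarith
  exact abs_le.mpr ⟨by linarith, by linarith⟩
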